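/- arXiv:1503.05160 — 3 statements merged into one kernel-verified Lean document; each statement's English description precedes it below -/
import Mathlib

section
/- (Gauss–Markov comparison in matrix form.) Let X be a real n×p matrix such that XᵀX is invertible, and let A be any real p×n matrix satisfying AX = I_p (so that AY is a linear unbiased estimator of β in the model Y = Xβ + e with E[e] = 0). Then the matrix AAᵀ − (XᵀX)⁻¹ is positive semidefinite. Consequently, since Cov(AY) = σ²AAᵀ and Cov(β̃) = σ²(XᵀX)⁻¹ when Cov(e) = σ²Iₙ, the least squares estimator β̃ = (XᵀX)⁻¹XᵀY is the best linear unbiased estimator of β. -/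
open Matrix

/-- **Gauss–Markov comparison in matrix form.**
If `XᵀX` is invertible and `A` is any `p × n` matrix with `AX = I_p`
(so `AY` is a linear unbiased estimator of `β`), then `AAᵀ − (XᵀX)⁻¹`
is positive semidefinite; hence the least squares estimator is BLUE. -/
theorem gauss_markov (n p : ℕ) (X : Matrix (Fin n) (Fin p) ℝ)
    (hX : IsUnit (Xᵀ * X)) (A : Matrix (Fin p) (Fin n) ℝ)
    (hA : A * X = 1) :
    (A * Aᵀ - (Xᵀ * X)⁻¹).PosSemidef := by
  have hdet : IsUnit (Xᵀ * X).det := (Matrix.isUnit_iff_isUnit_det _).mp hX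
  have hAt : Xᵀ * Aᵀ = 1 := by rw [← Matrix.transpose_mul, hA, Matrix.transpose_one]
  have hGt : ((Xᵀ * X)⁻¹)ᵀ = (Xᵀ * X)⁻¹ := by
    rw [Matrix.transpose_nonsing_inv, Matrix.transpose_mul, Matrix.transpose_transpose]
  have hG : (Xᵀ * X)⁻¹ * (Xᵀ * X) = 1 := Matrix.nonsing_inv_mul _ hdet
  generalize (Xᵀ * X)⁻¹ = G at hGt hG ⊢
  have h1 : A * (X * G) = G := by rw [← Matrix.mul_assoc, hA, Matrix.one_mul]
  have h2 : G * Xᵀ * Aᵀ = G := by rw [Matrix.mul_assoc, hAt, Matrix.mul_one]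
  have h3 : G * Xᵀ * (X * G) = G := by
    rw [← Matrix.mul_assoc, Matrix.mul_assoc G, hG, Matrix.one_mul]
  have key : A * Aᵀ - G = (A - G * Xᵀ) * (A - G * Xᵀ)ᴴ := by
    rw [Matrix.conjTranspose_eq_transpose_of_trivial, Matrix.transpose_sub,
      Matrix.transpose_mul, Matrix.transpose_transpose, hGt, Matrix.sub_mul,
      Matrix.mul_sub, Matrix.mul_sub, h1, h2, h3, sub_self, sub_zero]
  rw [key]
  exact Matrix.posSemidef_self_mul_conjTranspose _
end

section
/- (Restricted least squares estimator.) Let X be a real n×p matrix with C = XᵀX invertible, let H be a real q×p matrix such that HC⁻¹Hᵀ is invertible, let h ∈ ℝ^q, let Y ∈ ℝⁿ, and let β̃ = (XᵀX)⁻¹XᵀY. Define β̂ = β̃ − C⁻¹Hᵀ(HC⁻¹Hᵀ)⁻¹(Hβ̃ − h). Then Hβ̂ = h, and β̂ minimizes the least-squares criterion over the restricted set: for every β ∈ ℝᵖ with Hβ = h, ‖Y − Xβ̂‖₂² ≤ ‖Y − Xβ‖₂². -/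
open Matrix Finset

/-- **Restricted least squares estimator.**
With `C = XᵀX` invertible, `HC⁻¹Hᵀ` invertible, `β̃ = C⁻¹XᵀY`, the estimator
`β̂ = β̃ − C⁻¹Hᵀ(HC⁻¹Hᵀ)⁻¹(Hβ̃ − h)` satisfies the restriction `Hβ̂ = h` and
minimizes the least-squares criterion over `{β : Hβ = h}`. -/
theorem restricted_lse (n p q : ℕ) (X : Matrix (Fin n) (Fin p) ℝ)
    (H : Matrix (Fin q) (Fin p) ℝ) (h : Fin q → ℝ) (Y : Fin n → ℝ)
    (hC : IsUnit (Xᵀ * X)) (hH : IsUnit (H * (Xᵀ * X)⁻¹ * Hᵀ)) :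
    let C := Xᵀ * X
    let βt := C⁻¹.mulVec (Xᵀ.mulVec Y)
    let βhat := βt - C⁻¹.mulVec (Hᵀ.mulVec ((H * C⁻¹ * Hᵀ)⁻¹.mulVec (H.mulVec βt - h)))
    H.mulVec βhat = h ∧
      ∀ β : Fin p → ℝ, H.mulVec β = h →
        (∑ i, (Y i - X.mulVec βhat i) ^ 2) ≤ ∑ i, (Y i - X.mulVec β i) ^ 2 := by
  intro C βt βhat
  have hCd : IsUnit C.det := (Matrix.isUnit_iff_isUnit_det _).1 hC
  have hHd : IsUnit (H * C⁻¹ * Hᵀ).det := (Matrix.isUnit_iff_isUnit_det _).1 hH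
  have h1 : H.mulVec βhat = h := by
    have e : H.mulVec (C⁻¹.mulVec (Hᵀ.mulVec ((H * C⁻¹ * Hᵀ)⁻¹.mulVec (H.mulVec βt - h))))
        = H.mulVec βt - h := by
      rw [Matrix.mulVec_mulVec, Matrix.mulVec_mulVec, Matrix.mulVec_mulVec,
        Matrix.mul_nonsing_inv _ hHd, Matrix.one_mulVec]
    change H.mulVec (βt - _) = h
    rw [Matrix.mulVec_sub, e, sub_sub_cancel]
  refine ⟨h1, fun β hβ => ?_⟩
  obtain ⟨l, hl⟩ : ∃ l, Xᵀ.mulVec (Y - X.mulVec βhat) = Hᵀ.mulVec l := by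
    refine ⟨(H * C⁻¹ * Hᵀ)⁻¹.mulVec (H.mulVec βt - h), ?_⟩
    rw [Matrix.mulVec_sub, Matrix.mulVec_mulVec]
    change _ - C.mulVec (C⁻¹.mulVec (Xᵀ.mulVec Y) - C⁻¹.mulVec _) = _
    rw [Matrix.mulVec_sub, Matrix.mulVec_mulVec _ C, Matrix.mulVec_mulVec _ C,
      Matrix.mul_nonsing_inv _ hCd, Matrix.one_mulVec, Matrix.one_mulVec, sub_sub_cancel]
  clear_value βhat
  have hd : H.mulVec (βhat - β) = 0 := by rw [Matrix.mulVec_sub, h1, hβ, sub_self]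
  have cross : (Y - X.mulVec βhat) ⬝ᵥ X.mulVec (βhat - β) = 0 := by
    rw [Matrix.dotProduct_mulVec, ← Matrix.mulVec_transpose, hl, Matrix.mulVec_transpose,
      ← Matrix.dotProduct_mulVec, hd, dotProduct_zero]
  have key : ∑ i, (Y i - X.mulVec β i) ^ 2 = ∑ i, (Y i - X.mulVec βhat i) ^ 2
      + 2 * ((Y - X.mulVec βhat) ⬝ᵥ X.mulVec (βhat - β))
      + ∑ i, (X.mulVec (βhat - β) i) ^ 2 := by
    rw [dotProduct, Finset.mul_sum, ← Finset.sum_add_distrib, ← Finset.sum_add_distrib]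
    refine Finset.sum_congr rfl fun i _ => ?_
    rw [Matrix.mulVec_sub]
    simp only [Pi.sub_apply]
    ring
  rw [key, cross]
  have : 0 ≤ ∑ i, (X.mulVec (βhat - β) i) ^ 2 := Finset.sum_nonneg fun i _ => sq_nonneg _
  linarith
end

section
/- (Monotonicity of the noncentral chi-square CDF in the degrees of freedom.) For every integer m ≥ 1, every δ ≥ 0, and every x ∈ ℝ, one has H_{m+2}(x; δ) ≤ H_m(x; δ). -/
open MeasureTheory

/-- CDF of the central chi-square distribution with `d` degrees of freedom,
i.e. the Gamma distribution with shape `d/2` and rate `1/2`. -/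
noncomputable def chiSqCDF (d : ℕ) (x : ℝ) : ℝ :=
  if 0 ≤ x then
    ∫ t in (0 : ℝ)..x,
      ((1 / 2 : ℝ) ^ ((d : ℝ) / 2) / Real.Gamma ((d : ℝ) / 2)) *
        t ^ ((d : ℝ) / 2 - 1) * Real.exp (-t / 2)
  else 0

/-- CDF of the noncentral chi-square distribution with `m` degrees of freedom and
noncentrality `δ`: `H_m(x; δ) = Σⱼ e^{−δ/2} (δ/2)ʲ/j! · G_{m+2j}(x)`. -/
noncomputable def ncChiSqCDF (m : ℕ) (δ x : ℝ) : ℝ :=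
  ∑' j : ℕ, Real.exp (-δ / 2) * (δ / 2) ^ j / (Nat.factorial j) * chiSqCDF (m + 2 * j) x


lemma chiSq_integrable (a x c : ℝ) (ha : 0 < a) :
    IntervalIntegrable (fun t : ℝ => c * t ^ (a - 1) * Real.exp (-t / 2)) volume 0 x := by
  have h1 : IntervalIntegrable (fun t : ℝ => t ^ (a - 1)) volume 0 x :=
    intervalIntegral.intervalIntegrable_rpow' (by linarith)
  exact (h1.const_mul c).mul_continuousOn (by fun_prop)

lemma chiSqCDF_nonneg (d : ℕ) (hd : 1 ≤ d) (x : ℝ) : 0 ≤ chiSqCDF d x := by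
  unfold chiSqCDF
  split_ifs with hx
  · have hd' : (0 : ℝ) < d := by exact_mod_cast hd
    apply intervalIntegral.integral_nonneg hx
    intro t ht
    have h0 : 0 ≤ t := ht.1
    have := Real.Gamma_pos_of_pos (show (0 : ℝ) < (d : ℝ) / 2 by positivity)
    positivity
  · exact le_rfl

lemma chiSqCDF_step (d : ℕ) (hd : 1 ≤ d) (x : ℝ) : chiSqCDF (d + 2) x ≤ chiSqCDF d x := by
  unfold chiSqCDF
  split_ifs with hx
  · have hd' : (0 : ℝ) < d := by exact_mod_cast hd
    have e : ((d + 2 : ℕ) : ℝ) / 2 = (d : ℝ) / 2 + 1 := by push_cast; ring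
    rw [e]
    have ha : (0 : ℝ) < (d : ℝ) / 2 := by positivity
    generalize (d : ℝ) / 2 = a at ha
    have hG := Real.Gamma_pos_of_pos ha
    rw [← sub_nonneg, ← intervalIntegral.integral_sub (chiSq_integrable a x _ ha)
      (chiSq_integrable (a + 1) x _ (by linarith))]
    have key := intervalIntegral.integral_eq_sub_of_hasDerivAt_of_le (a := 0) (b := x) hx
      (f := fun t : ℝ => (1 / 2 : ℝ) ^ a / Real.Gamma a / a * (t ^ a * Real.exp (-t / 2)))
      (f' := fun t : ℝ => (1 / 2 : ℝ) ^ a / Real.Gamma a * t ^ (a - 1) * Real.exp (-t / 2) -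
        (1 / 2 : ℝ) ^ (a + 1) / Real.Gamma (a + 1) * t ^ (a + 1 - 1) * Real.exp (-t / 2))
      (by
        apply ContinuousOn.mul continuousOn_const
        apply ContinuousOn.mul _ (by fun_prop)
        exact (Real.continuous_rpow_const ha.le).continuousOn)
      (by
        intro t ht
        have h1 := Real.hasDerivAt_rpow_const (x := t) (p := a) (Or.inl ht.1.ne')
        have h2 : HasDerivAt (fun t : ℝ => Real.exp (-t / 2)) (Real.exp (-t / 2) * (-1 / 2)) t :=
          ((hasDerivAt_id t).neg.div_const 2).exp
        refine ((h1.mul h2).const_mul ((1 / 2 : ℝ) ^ a / Real.Gamma a / a)).congr_deriv ?_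
        rw [Real.Gamma_add_one ha.ne', Real.rpow_add_one (by norm_num), add_sub_cancel_right]
        field_simp
        ring)
      ((chiSq_integrable a x _ ha).sub (chiSq_integrable (a + 1) x _ (by linarith)))
    rw [key]
    simp only [Real.zero_rpow ha.ne', zero_mul, mul_zero, sub_zero]
    positivity
  · exact le_rfl

lemma chiSqCDF_bound (m : ℕ) (hm : 1 ≤ m) (x : ℝ) (j : ℕ) :
    chiSqCDF (m + 2 * j) x ≤ chiSqCDF m x := by
  induction j with
  | zero => simp
  | succ k ih => exact (chiSqCDF_step (m + 2 * k) (by omega) x).trans ih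

lemma ncChiSq_summable (m : ℕ) (hm : 1 ≤ m) (δ : ℝ) (hδ : 0 ≤ δ) (x : ℝ) :
    Summable fun j : ℕ =>
      Real.exp (-δ / 2) * (δ / 2) ^ j / (Nat.factorial j) * chiSqCDF (m + 2 * j) x := by
  refine Summable.of_nonneg_of_le (fun j => ?_) (fun j => ?_)
    (((Real.summable_pow_div_factorial (δ / 2)).mul_left (Real.exp (-δ / 2))).mul_right
      (chiSqCDF m x))
  · have := chiSqCDF_nonneg (m + 2 * j) (by omega) x
    positivity
  · rw [mul_div_assoc]
    exact mul_le_mul_of_nonneg_left (chiSqCDF_bound m hm x j) (by positivity)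

/-- **Monotonicity of the noncentral chi-square CDF in the degrees of freedom:**
`H_{m+2}(x; δ) ≤ H_m(x; δ)`. -/
theorem ncChiSqCDF_anti_dof (m : ℕ) (hm : 1 ≤ m) (δ : ℝ) (hδ : 0 ≤ δ) (x : ℝ) :
    ncChiSqCDF (m + 2) δ x ≤ ncChiSqCDF m δ x := by
  unfold ncChiSqCDF
  refine Summable.tsum_le_tsum (fun j => ?_) (ncChiSq_summable (m + 2) (by omega) δ hδ x)
    (ncChiSq_summable m hm δ hδ x)
  have h := chiSqCDF_step (m + 2 * j) (by omega) x
  rw [show m + 2 * j + 2 = m + 2 + 2 * j by ring] at h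
  exact mul_le_mul_of_nonneg_left h (by positivity)
end
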